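/- arXiv:2205.01229 — 5 statements merged into one kernel-verified Lean document; each statement's English description precedes it below -/
import Mathlib

section
/- Let S be a finite set equipped with a strict linear order ≺, and let p, c : S → ℝ with p_k ≥ 0 for all k ∈ S. If for every k ∈ S we have c_k ≥ p_k + Σ_{k' ∈ S, k' ≺ k} p_{k'}, then Σ_{k∈S} c_k·p_k ≥ (1/2)·Σ_{k∈S} p_k² + (1/2)·(Σ_{k∈S} p_k)². -/
section Tournament

variable {ι : Type*} (r : ι → ι → Prop) [DecidableRel r] [Std.Trichotomous r] [Std.Asymm r]

theorem sum_eq_add_sum_filter_rel_add_sum_filter_rel {M : Type*} [AddCommMonoid M]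
    {s : Finset ι} {i : ι} (hi : i ∈ s) (f : ι → M) :
    ∑ j ∈ s, f j = f i + (∑ j ∈ s with r j i, f j + ∑ j ∈ s with r i j, f j) := by
  classical
  have erase_filter_rel : {j ∈ s.erase i | r j i} = {j ∈ s | r j i} := by
    grind [irrefl_of r i]
  have erase_filter_not_rel : {j ∈ s.erase i | ¬ r j i} = {j ∈ s | r i j} := by
    grind [irrefl_of r i, trichotomous_of r, asymm_of r]
  rw [← Finset.add_sum_erase s f hi, ← Finset.sum_filter_add_sum_filter_not _ (r · i),
    erase_filter_rel, erase_filter_not_rel]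

theorem sum_sum_eq_sum_diag_add_sum_rel {M : Type*} [AddCommMonoid M]
    (s : Finset ι) (f : ι → ι → M) :
    ∑ i ∈ s, ∑ j ∈ s, f i j =
      ∑ i ∈ s, f i i + ∑ i ∈ s, ∑ j ∈ s with r j i, (f i j + f j i) := by
  have sum_swap : ∑ i ∈ s, ∑ j ∈ s with r i j, f i j = ∑ i ∈ s, ∑ j ∈ s with r j i, f j i :=
    Finset.sum_comm' (by grind)
  calc
    ∑ i ∈ s, ∑ j ∈ s, f i j
      = ∑ i ∈ s, (f i i + (∑ j ∈ s with r j i, f i j + ∑ j ∈ s with r i j, f i j)) :=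
        Finset.sum_congr rfl fun i hi ↦ sum_eq_add_sum_filter_rel_add_sum_filter_rel r hi (f i)
    _ = ∑ i ∈ s, f i i + ∑ i ∈ s, ∑ j ∈ s with r j i, (f i j + f j i) := by
        simp only [Finset.sum_add_distrib, sum_swap]

theorem sq_sum_eq_sum_sq_add_two_mul_sum_rel {R : Type*} [CommSemiring R]
    (s : Finset ι) (f : ι → R) :
    (∑ i ∈ s, f i) ^ 2 =
      ∑ i ∈ s, f i ^ 2 + 2 * ∑ i ∈ s, (∑ j ∈ s with r j i, f j) * f i := by
  rw [sq, Finset.sum_mul_sum, sum_sum_eq_sum_diag_add_sum_rel r]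
  simp only [sq, Finset.mul_sum, Finset.sum_mul, mul_comm (f _) (f _), ← two_mul]

theorem sum_completion_mul_proc_ge_general {R : Type*} [CommSemiring R] [PartialOrder R]
    [IsOrderedRing R] (s : Finset ι) (p c : ι → R) (hp : ∀ k ∈ s, 0 ≤ p k)
    (hc : ∀ k ∈ s, p k + ∑ k' ∈ s with r k' k, p k' ≤ c k) :
    ∑ k ∈ s, p k ^ 2 + (∑ k ∈ s, p k) ^ 2 ≤ 2 * ∑ k ∈ s, c k * p k :=
  calc
    ∑ k ∈ s, p k ^ 2 + (∑ k ∈ s, p k) ^ 2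
      = 2 * ∑ k ∈ s, (p k + ∑ k' ∈ s with r k' k, p k') * p k := by
        simp only [sq_sum_eq_sum_sq_add_two_mul_sum_rel r, add_mul, Finset.sum_add_distrib, ← sq]
        ring
    _ ≤ 2 * ∑ k ∈ s, c k * p k :=
        mul_le_mul_of_nonneg_left
          (Finset.sum_le_sum fun k hk ↦ mul_le_mul_of_nonneg_right (hc k hk) (hp k hk))
          zero_le_two

end Tournament

/-- If every element's completion time is at least its own processing time plus the
processing times of all strictly preceding elements, then
`∑ c_k p_k ≥ (1/2) ∑ p_k² + (1/2) (∑ p_k)²`. -/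
theorem sum_completion_mul_proc_ge {α : Type*} [LinearOrder α]
    (S : Finset α) (p c : α → ℝ)
    (hp : ∀ k ∈ S, 0 ≤ p k)
    (hc : ∀ k ∈ S, p k + ∑ k' ∈ S.filter (fun k' => k' < k), p k' ≤ c k) :
    (1 / 2) * ∑ k ∈ S, (p k) ^ 2 + (1 / 2) * (∑ k ∈ S, p k) ^ 2
      ≤ ∑ k ∈ S, c k * p k := by
  linarith [sum_completion_mul_proc_ge_general (· < ·) S p c hp hc]
end

section
/- Let C be a finite set of coflows with a strict linear order ≺ (the scheduling priority), acceptance indicators z : C → {0,1}, processing times p : C → ℝ with p_k ≥ 0, completion times c : C → ℝ, and deadlines T : C → ℝ. Assume that for every k ∈ C, c_k ≥ p_k + Σ_{k' ∈ C, k' ≺ k} p_{k'}·z_{k'}, and that every accepted coflow meets its deadline, i.e. z_k = 1 implies c_k ≤ T_k. Then for every subset S ⊆ {k ∈ C : z_k = 1} of accepted coflows, Σ_{k∈S} p_k·T_k ≥ f(S). -/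
/-- `f(S) := (1/2)·∑_{k∈S} p_k² + (1/2)·(∑_{k∈S} p_k)²`. -/
noncomputable def f {α : Type*} (S : Finset α) (p : α → ℝ) : ℝ :=
  (1 / 2) * ∑ k ∈ S, (p k) ^ 2 + (1 / 2) * (∑ k ∈ S, p k) ^ 2

/-!
The value `f S p` is the sum of the completion times weighted by `p` when the coflows of `S` run
alone and without idle time on the port, in whatever order: each unordered pair of coflows
contributes its product exactly once. The coflows of `C` outside `S` can only delay those of `S`.
-/

theorem sum_sq_add_sq_sum_eq_two_mul_sum {ι R : Type*} [LinearOrder ι] [CommSemiring R]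
    (s : Finset ι) (p : ι → R) :
    ∑ k ∈ s, p k ^ 2 + (∑ k ∈ s, p k) ^ 2 =
      2 * ∑ k ∈ s, p k * (p k + ∑ j ∈ s with j < k, p j) := by
  induction s using Finset.induction_on_max with
  | empty => simp
  | insert a s lt_a ih =>
    have ha : a ∉ s := fun h => (lt_a a h).false
    have below_max : {j ∈ insert a s | j < a} = s := by
      rw [Finset.filter_insert, if_neg (lt_irrefl a), Finset.filter_true_of_mem lt_a]
    have below_old : ∀ k ∈ s, {j ∈ insert a s | j < k} = {j ∈ s | j < k} := fun k hk => by
      rw [Finset.filter_insert, if_neg (lt_a k hk).not_gt]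
    have old_terms : ∑ k ∈ s, p k * (p k + ∑ j ∈ insert a s with j < k, p j) =
        ∑ k ∈ s, p k * (p k + ∑ j ∈ s with j < k, p j) :=
      Finset.sum_congr rfl fun k hk => by rw [below_old k hk]
    rw [Finset.sum_insert ha, Finset.sum_insert ha, Finset.sum_insert ha, below_max, old_terms,
      mul_add, ← ih]
    ring

theorem f_eq_sum_mul_add_sum_lt {α : Type*} [LinearOrder α] (S : Finset α) (p : α → ℝ) :
    f S p = ∑ k ∈ S, p k * (p k + ∑ j ∈ S with j < k, p j) := by
  unfold f
  linarith [sum_sq_add_sq_sum_eq_two_mul_sum S p]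

theorem sum_le_sum_mul_of_subset {ι R : Type*} [Semiring R] [PartialOrder R] [IsOrderedRing R]
    {s t : Finset ι} {p z : ι → R} (hst : s ⊆ t) (hp : ∀ k ∈ t, 0 ≤ p k) (hz : ∀ k ∈ t, 0 ≤ z k)
    (one_le_z : ∀ k ∈ s, 1 ≤ z k) : ∑ k ∈ s, p k ≤ ∑ k ∈ t, p k * z k :=
  calc ∑ k ∈ s, p k
    _ ≤ ∑ k ∈ s, p k * z k :=
      Finset.sum_le_sum fun k hk => le_mul_of_one_le_right (hp k (hst hk)) (one_le_z k hk)
    _ ≤ ∑ k ∈ t, p k * z k :=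
      Finset.sum_le_sum_of_subset_of_nonneg hst fun k hk _ => mul_nonneg (hp k hk) (hz k hk)

theorem parallel_inequalities_accepted_general {α : Type*} [LinearOrder α]
    {S C : Finset α} {z p c T : α → ℝ} (hSC : S ⊆ C)
    (hz : ∀ k ∈ C, 0 ≤ z k) (one_le_z : ∀ k ∈ S, 1 ≤ z k) (hp : ∀ k ∈ C, 0 ≤ p k)
    (hc : ∀ k ∈ S, p k + ∑ k' ∈ C with k' < k, p k' * z k' ≤ c k)
    (hmeet : ∀ k ∈ S, c k ≤ T k) :
    f S p ≤ ∑ k ∈ S, p k * T k := by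
  rw [f_eq_sum_mul_add_sum_lt]
  refine Finset.sum_le_sum fun k hk => mul_le_mul_of_nonneg_left ?_ (hp k (hSC hk))
  calc p k + ∑ j ∈ S with j < k, p j
    _ ≤ p k + ∑ j ∈ C with j < k, p j * z j := by
      gcongr
      exact sum_le_sum_mul_of_subset (Finset.filter_subset_filter _ hSC)
        (fun j hj => hp j (Finset.mem_of_mem_filter j hj))
        (fun j hj => hz j (Finset.mem_of_mem_filter j hj))
        (fun j hj => one_le_z j (Finset.mem_of_mem_filter j hj))
    _ ≤ c k := hc k hk
    _ ≤ T k := hmeet k hk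

/-- **Parallel inequalities for accepted coflows.** If each coflow's completion time
is at least its own processing time plus the processing times of higher-priority
*accepted* coflows, and every accepted coflow meets its deadline, then every subset
`S` of accepted coflows satisfies `∑_{k∈S} p_k T_k ≥ f(S)`. -/
theorem parallel_inequalities_accepted {α : Type*} [LinearOrder α]
    (C : Finset α) (z p c T : α → ℝ)
    (hz : ∀ k ∈ C, z k = 0 ∨ z k = 1)
    (hp : ∀ k ∈ C, 0 ≤ p k)
    (hc : ∀ k ∈ C, p k + ∑ k' ∈ C.filter (fun k' => k' < k), p k' * z k' ≤ c k)
    (hmeet : ∀ k ∈ C, z k = 1 → c k ≤ T k) :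
    ∀ S ⊆ C.filter (fun k => z k = 1), f S p ≤ ∑ k ∈ S, p k * T k := by
  intro S hS
  have hSC : S ⊆ C := hS.trans (Finset.filter_subset _ C)
  have accepted : ∀ k ∈ S, z k = 1 := fun k hk => (Finset.mem_filter.1 (hS hk)).2
  exact parallel_inequalities_accepted_general hSC
    (fun k hk => (hz k hk).elim Eq.ge fun h => h ▸ zero_le_one) (fun k hk => (accepted k hk).ge) hp
    (fun k hk => hc k (hSC hk)) (fun k hk => hmeet k (hSC hk) (accepted k hk))
end

section
/- Let S be a finite set, p, T : S → ℝ, and for k' ∈ S define the removal slack g(k') := f(S \ {k'}) − Σ_{k ∈ S \ {k'}} p_k·T_k and the score Ψ_{k'} := p_{k'}·(T_{k'} − Σ_{k∈S} p_k). Then for all k₁, k₂ ∈ S, g(k₁) ≤ g(k₂) if and only if Ψ_{k₁} ≤ Ψ_{k₂}; in particular, a coflow minimizing Ψ over S also minimizes the removal slack g over S. -/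
/-- The defect `f(S) − ∑_{k∈S} p_k T_k` of the parallel inequality of `S` on a port. The removal
slack of `k'` is the defect of `S.erase k'`. -/
noncomputable def parallelDefect {α : Type*} (S : Finset α) (p T : α → ℝ) : ℝ :=
  f S p - ∑ k ∈ S, p k * T k

/-- The score `Ψ_{k'}` by which a coflow is selected for removal from `S`. It is defined for every
`k'`, but is meant for `k' ∈ S`. -/
noncomputable def removalScore {α : Type*} (S : Finset α) (p T : α → ℝ) (k' : α) : ℝ :=
  p k' * (T k' - ∑ k ∈ S, p k)

section Erase

variable {α : Type*} [DecidableEq α] {S : Finset α} {k k₁ k₂ : α}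

theorem f_erase (p : α → ℝ) (hk : k ∈ S) :
    f (S.erase k) p = f S p - p k * ∑ j ∈ S, p j := by
  simp only [f, Finset.sum_erase_eq_sub hk]
  ring

theorem parallelDefect_erase (p T : α → ℝ) (hk : k ∈ S) :
    parallelDefect (S.erase k) p T = parallelDefect S p T + removalScore S p T k := by
  simp only [parallelDefect, removalScore, f_erase p hk, Finset.sum_erase_eq_sub hk]
  ring

theorem parallelDefect_erase_le_parallelDefect_erase_iff (p T : α → ℝ)
    (hk₁ : k₁ ∈ S) (hk₂ : k₂ ∈ S) :
    parallelDefect (S.erase k₁) p T ≤ parallelDefect (S.erase k₂) p T ↔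
      removalScore S p T k₁ ≤ removalScore S p T k₂ := by
  rw [parallelDefect_erase p T hk₁, parallelDefect_erase p T hk₂, add_le_add_iff_left]

end Erase

/-- Minimizing the score `Ψ_{k'} = p_{k'}(T_{k'} − ∑_{k∈S} p_k)` over `S` is the same
as minimizing the removal slack `g(k') = f(S∖{k'}) − ∑_{k∈S∖{k'}} p_k T_k`:
the two orders agree, and in particular a minimizer of `Ψ` minimizes `g`. -/
theorem score_order_iff_removal_slack_order {α : Type*} [DecidableEq α]
    (S : Finset α) (p T : α → ℝ) (g Ψ : α → ℝ)
    (hg : ∀ k' ∈ S, g k' = f (S.erase k') p - ∑ k ∈ S.erase k', p k * T k)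
    (hΨ : ∀ k' ∈ S, Ψ k' = p k' * (T k' - ∑ k ∈ S, p k)) :
    (∀ k₁ ∈ S, ∀ k₂ ∈ S, (g k₁ ≤ g k₂ ↔ Ψ k₁ ≤ Ψ k₂)) ∧
    (∀ k' ∈ S, (∀ k ∈ S, Ψ k' ≤ Ψ k) → ∀ k ∈ S, g k' ≤ g k) := by
  have order : ∀ k₁ ∈ S, ∀ k₂ ∈ S, (g k₁ ≤ g k₂ ↔ Ψ k₁ ≤ Ψ k₂) := by
    intro k₁ hk₁ k₂ hk₂
    rw [hg k₁ hk₁, hg k₂ hk₂, hΨ k₁ hk₁, hΨ k₂ hk₂]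
    exact parallelDefect_erase_le_parallelDefect_erase_iff p T hk₁ hk₂
  exact ⟨order, fun k' hk' hmin k hk => (order k' hk' k hk).2 (hmin k hk)⟩
end

section
/- Fix an integer M ≥ 2 and a real ε > 0. Consider M coflows indexed 1,…,M and M − 1 ports of unit capacity indexed 1,…,M−1, with processing times p_{ℓ,1} = 1 for every port ℓ (coflow 1 uses all ports), p_{ℓ,i} = 1 + ε if ℓ = i − 1 and p_{ℓ,i} = 0 otherwise for i = 2,…,M (so coflows 2,…,M each use exactly one distinct port), deadline T_1 = 1 and T_i = 2 for i = 2,…,M. In the sequential-port model, under the priority order that schedules coflow 1 first (before all other coflows), coflow 1 has completion time 1 ≤ T_1, while every coflow i ∈ {2,…,M} has completion time 2 + ε > T_i; hence exactly 1 out of the M coflows meets its deadline, i.e., the coflow acceptance rate is 1/M. -/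
/-!
On every port, the coflow of highest priority waits for nothing, so coflow `1` finishes at time `1`
everywhere. Port `i - 1` is used by coflows `1` and `i` only, so coflow `i` finishes there at time
`1 + (1 + ε) = 2 + ε`, whatever the relative priorities of coflows `2, …, M`.
-/

namespace Coflow

theorem filter_eq_singleton_of_unique {κ : Type*} {s : Finset κ} {P : κ → Prop} [DecidablePred P]
    {a : κ} (ha : a ∈ s) (hPa : P a) (hunique : ∀ i ∈ s, i ≠ a → ¬P i) : s.filter P = {a} := by
  ext i
  grind

variable {π κ α : Type*} [Preorder α] [DecidableLE α]

/-- The completion time of coflow `k` on port `ℓ` in the sequential-port model, where `p ℓ j` is the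
processing time of coflow `j` on port `ℓ`. A smaller `rank` means a higher priority, and a coflow
also waits for those whose rank ties with its own. -/
def portCompletionTime (p : π → κ → ℝ) (coflows : Finset κ) (rank : κ → α) (ℓ : π) (k : κ) : ℝ :=
  ∑ j ∈ coflows with rank j ≤ rank k, p ℓ j

/-- The completion time of coflow `k` in the sequential-port model: the largest of its completion
times on the ports it uses, i.e. where its processing time is positive, with the junk value `0` if
there are none. -/
noncomputable def completionTime (p : π → κ → ℝ) (ports : Finset π) (coflows : Finset κ)
    (rank : κ → α) (k : κ) : ℝ :=
  sSup {x | ∃ ℓ ∈ ports, 0 < p ℓ k ∧ x = portCompletionTime p coflows rank ℓ k}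

variable {p : π → κ → ℝ} {ports : Finset π} {coflows : Finset κ} {rank : κ → α} {ℓ : π} {j k : κ}

theorem portCompletionTime_eq_self_of_first (hk : k ∈ coflows)
    (hfirst : ∀ i ∈ coflows, i ≠ k → ¬rank i ≤ rank k) :
    portCompletionTime p coflows rank ℓ k = p ℓ k := by
  rw [portCompletionTime, filter_eq_singleton_of_unique hk (le_refl (rank k)) hfirst,
    Finset.sum_singleton]

theorem portCompletionTime_eq_add_of_shared (hj : j ∈ coflows) (hk : k ∈ coflows) (hjk : j ≠ k)
    (hrank : rank j ≤ rank k) (hshared : ∀ i ∈ coflows, i ≠ j → i ≠ k → p ℓ i = 0) :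
    portCompletionTime p coflows rank ℓ k = p ℓ j + p ℓ k :=
  Finset.sum_eq_add_of_mem j k (Finset.mem_filter.2 ⟨hj, hrank⟩) (Finset.mem_filter.2 ⟨hk, le_rfl⟩)
    hjk fun i hi hne ↦ hshared i (Finset.mem_of_mem_filter i hi) hne.1 hne.2

theorem completionTime_eq_of_forall_port {c : ℝ} (hused : ∃ ℓ ∈ ports, 0 < p ℓ k)
    (hc : ∀ ℓ ∈ ports, 0 < p ℓ k → portCompletionTime p coflows rank ℓ k = c) :
    completionTime p ports coflows rank k = c := by
  have times_eq :
      {x | ∃ ℓ ∈ ports, 0 < p ℓ k ∧ x = portCompletionTime p coflows rank ℓ k} = {c} := by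
    ext x
    constructor
    · rintro ⟨ℓ, hℓ, hpos, rfl⟩
      exact hc ℓ hℓ hpos
    · rintro rfl
      obtain ⟨ℓ, hℓ, hpos⟩ := hused
      exact ⟨ℓ, hℓ, hpos, (hc ℓ hℓ hpos).symm⟩
  rw [completionTime, times_eq, csSup_singleton]

theorem completionTime_eq_of_first {c : ℝ} (hk : k ∈ coflows)
    (hfirst : ∀ i ∈ coflows, i ≠ k → ¬rank i ≤ rank k) (hports : ports.Nonempty) (hc : 0 < c)
    (hp : ∀ ℓ ∈ ports, p ℓ k = c) :
    completionTime p ports coflows rank k = c := by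
  obtain ⟨ℓ, hℓ⟩ := hports
  refine completionTime_eq_of_forall_port ⟨ℓ, hℓ, (hp ℓ hℓ).symm ▸ hc⟩ fun ℓ' hℓ' _ ↦ ?_
  rw [portCompletionTime_eq_self_of_first hk hfirst, hp ℓ' hℓ']

theorem completionTime_eq_portCompletionTime_of_unique_port (hℓ : ℓ ∈ ports) (hpos : 0 < p ℓ k)
    (hunique : ∀ ℓ' ∈ ports, 0 < p ℓ' k → ℓ' = ℓ) :
    completionTime p ports coflows rank k = portCompletionTime p coflows rank ℓ k :=
  completionTime_eq_of_forall_port ⟨ℓ, hℓ, hpos⟩ fun ℓ' hℓ' hpos' ↦ by rw [hunique ℓ' hℓ' hpos']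

end Coflow

open Coflow

theorem csmha_worst_case_coflow_one_first_general {α : Type*} [Preorder α] [DecidableLE α]
    (M : ℕ) (hM : 2 ≤ M) (ε : ℝ) (hε : 0 < ε)
    (p : ℕ → ℕ → ℝ) (T : ℕ → ℝ)
    (hp1 : ∀ ℓ ∈ Finset.Icc 1 (M - 1), p ℓ 1 = 1)
    (hpi : ∀ ℓ ∈ Finset.Icc 1 (M - 1), ∀ i ∈ Finset.Icc 2 M,
      p ℓ i = if ℓ = i - 1 then 1 + ε else 0)
    (hT1 : T 1 = 1) (hTi : ∀ i ∈ Finset.Icc 2 M, T i = 2)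
    (rank : ℕ → α)
    (hfirst : ∀ i ∈ Finset.Icc 2 M, rank 1 < rank i)
    (ct : ℕ → ℝ)
    (hct : ∀ k ∈ Finset.Icc 1 M,
      ct k = completionTime p (Finset.Icc 1 (M - 1)) (Finset.Icc 1 M) rank k) :
    ct 1 = 1 ∧ ct 1 ≤ T 1 ∧
    (∀ i ∈ Finset.Icc 2 M, ct i = 2 + ε ∧ T i < ct i) ∧
    ((Finset.Icc 1 M).filter (fun k => ct k ≤ T k)).card = 1 ∧
    ((((Finset.Icc 1 M).filter (fun k => ct k ≤ T k)).card : ℝ)) / M = 1 / M := by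
  have mem_others {k : ℕ} (hk : k ∈ Finset.Icc 1 M) (hne : k ≠ 1) : k ∈ Finset.Icc 2 M := by
    grind
  have one_mem : 1 ∈ Finset.Icc 1 M := by grind
  have ct_one : ct 1 = 1 := by
    rw [hct 1 one_mem]
    exact completionTime_eq_of_first one_mem
      (fun i hi hne ↦ (hfirst i (mem_others hi hne)).not_ge) ⟨1, by grind⟩ one_pos hp1
  have ct_other {i : ℕ} (hi : i ∈ Finset.Icc 2 M) : ct i = 2 + ε := by
    have i_mem : i ∈ Finset.Icc 1 M := by grind
    have port_mem : i - 1 ∈ Finset.Icc 1 (M - 1) := by grind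
    have p_own : p (i - 1) i = 1 + ε := by rw [hpi _ port_mem i hi, if_pos rfl]
    have own_port_unique (ℓ : ℕ) (hℓ : ℓ ∈ Finset.Icc 1 (M - 1)) (hpos : 0 < p ℓ i) :
        ℓ = i - 1 := by
      grind
    have shared_with_one (k : ℕ) (hk : k ∈ Finset.Icc 1 M) (hk1 : k ≠ 1) (hki : k ≠ i) :
        p (i - 1) k = 0 := by
      grind
    rw [hct i i_mem,
      completionTime_eq_portCompletionTime_of_unique_port port_mem (by linarith) own_port_unique,
      portCompletionTime_eq_add_of_shared one_mem i_mem (by grind) (hfirst i hi).le shared_with_one,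
      hp1 _ port_mem, p_own]
    ring
  have meets_one : ct 1 ≤ T 1 := by rw [ct_one, hT1]
  have misses_other (i : ℕ) (hi : i ∈ Finset.Icc 2 M) : T i < ct i := by
    rw [ct_other hi, hTi i hi]
    linarith
  have on_time_eq : {k ∈ Finset.Icc 1 M | ct k ≤ T k} = {1} :=
    filter_eq_singleton_of_unique one_mem meets_one fun i hi hne ↦
      (misses_other i (mem_others hi hne)).not_ge
  refine ⟨ct_one, meets_one, fun i hi ↦ ⟨ct_other hi, misses_other i hi⟩, ?_⟩
  simp [on_time_eq]

/-- **Worst-case example, coflow 1 scheduled first.** With `M` coflows and `M − 1`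
unit-capacity ports, coflow `1` using every port with processing time `1` and
deadline `1`, and each coflow `i ∈ {2,…,M}` using only port `i − 1` with processing
time `1 + ε` and deadline `2`: in the sequential-port model, under any priority
order that schedules coflow `1` first, coflow `1` has completion time `1 ≤ T 1`,
every coflow `i ∈ {2,…,M}` has completion time `2 + ε > T i`, exactly one coflow
meets its deadline, and the coflow acceptance rate is `1 / M`. -/
theorem csmha_worst_case_coflow_one_first
    (M : ℕ) (hM : 2 ≤ M) (ε : ℝ) (hε : 0 < ε)
    (p : ℕ → ℕ → ℝ) (T : ℕ → ℝ)
    (hp1 : ∀ ℓ ∈ Finset.Icc 1 (M - 1), p ℓ 1 = 1)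
    (hpi : ∀ ℓ ∈ Finset.Icc 1 (M - 1), ∀ i ∈ Finset.Icc 2 M,
      p ℓ i = if ℓ = i - 1 then 1 + ε else 0)
    (hT1 : T 1 = 1) (hTi : ∀ i ∈ Finset.Icc 2 M, T i = 2)
    (rank : ℕ → ℕ) (hrank : Set.InjOn rank (Set.Icc 1 M))
    (hfirst : ∀ i ∈ Finset.Icc 2 M, rank 1 < rank i)
    (ct : ℕ → ℝ)
    (hct : ∀ k ∈ Finset.Icc 1 M,
      ct k = sSup {x : ℝ | ∃ ℓ ∈ Finset.Icc 1 (M - 1), 0 < p ℓ k ∧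
        x = ∑ k' ∈ (Finset.Icc 1 M).filter (fun k' => rank k' ≤ rank k), p ℓ k'}) :
    ct 1 = 1 ∧ ct 1 ≤ T 1 ∧
    (∀ i ∈ Finset.Icc 2 M, ct i = 2 + ε ∧ T i < ct i) ∧
    ((Finset.Icc 1 M).filter (fun k => ct k ≤ T k)).card = 1 ∧
    ((((Finset.Icc 1 M).filter (fun k => ct k ≤ T k)).card : ℝ)) / M = 1 / M :=
  csmha_worst_case_coflow_one_first_general M hM ε hε p T hp1 hpi hT1 hTi rank hfirst ct hct
end

section
/- Let C be a finite set of coflows with a strict linear order ≺, acceptance indicators z : C → {0,1}, processing times p : C → ℝ with p_k ≥ 0, completion times c : C → ℝ, and deadlines T : C → ℝ, such that c_k ≥ p_k + Σ_{k' ≺ k} p_{k'}·z_{k'} for all k ∈ C. If there exists a subset S ⊆ {k ∈ C : z_k = 1} with Σ_{k∈S} p_k·T_k < f(S), then at least one accepted coflow misses its deadline, i.e., there exists k ∈ C with z_k = 1 and c_k > T_k. -/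
/-!
Expanding the square in `f` gives `f(S) = ∑_{k ∈ S} p_k (p_k + ∑_{j ∈ S, j ≺ k} p_j)`: the weighted
sum, with weights `p_k`, of the completion times obtained by running `S` alone, in priority order
and without idling. Actual completion times are no smaller, so `f(S) ≤ ∑_{k ∈ S} p_k c_k`. A strict
inequality `∑_{k ∈ S} p_k T_k < f(S)` therefore forces `T_k < c_k` for some `k ∈ S`.
-/

theorem sq_sum_eq_sum_sq_add_two_mul_sum_filter_lt {α R : Type*} [LinearOrder α] [CommSemiring R]
    (S : Finset α) (p : α → R) :
    (∑ k ∈ S, p k) ^ 2 = ∑ k ∈ S, p k ^ 2 + 2 * ∑ k ∈ S, p k * ∑ j ∈ S with j < k, p j := by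
  induction S using Finset.induction_on_max with
  | empty => simp
  | insert a S lt_a ih =>
    have a_notMem : a ∉ S := fun ha => (lt_a a ha).false
    have below_a : {j ∈ insert a S | j < a} = S := by
      rw [Finset.filter_insert, if_neg (lt_irrefl a), Finset.filter_true_of_mem lt_a]
    have sum_of_mem : ∑ k ∈ S, p k * ∑ j ∈ insert a S with j < k, p j =
        ∑ k ∈ S, p k * ∑ j ∈ S with j < k, p j :=
      Finset.sum_congr rfl fun k hk => by rw [Finset.filter_insert, if_neg (lt_a k hk).not_gt]
    simp only [Finset.sum_insert a_notMem, below_a, sum_of_mem]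
    rw [add_sq, ih]
    ring

theorem sum_le_sum_mul_of_subset_of_one_le {α R : Type*} [Semiring R] [PartialOrder R]
    [IsOrderedRing R] {S C : Finset α} {p z : α → R} (hSC : S ⊆ C) (hp : ∀ k ∈ C, 0 ≤ p k)
    (hz : ∀ k ∈ C, 0 ≤ z k) (hzS : ∀ k ∈ S, 1 ≤ z k) :
    ∑ k ∈ S, p k ≤ ∑ k ∈ C, p k * z k :=
  calc ∑ k ∈ S, p k
    _ ≤ ∑ k ∈ S, p k * z k :=
      Finset.sum_le_sum fun k hk => le_mul_of_one_le_right (hp k (hSC hk)) (hzS k hk)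
    _ ≤ ∑ k ∈ C, p k * z k :=
      Finset.sum_le_sum_of_subset_of_nonneg hSC fun k hk _ => mul_nonneg (hp k hk) (hz k hk)

section

variable {α : Type*} [LinearOrder α]

theorem f_eq_sum_mul_add_sum_filter_lt (S : Finset α) (p : α → ℝ) :
    f S p = ∑ k ∈ S, p k * (p k + ∑ j ∈ S with j < k, p j) := by
  simp only [f, sq_sum_eq_sum_sq_add_two_mul_sum_filter_lt, mul_add, Finset.sum_add_distrib,
    ← sq]
  ring

theorem f_le_sum_mul {S : Finset α} {p c : α → ℝ} (hp : ∀ k ∈ S, 0 ≤ p k)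
    (hc : ∀ k ∈ S, p k + ∑ j ∈ S with j < k, p j ≤ c k) :
    f S p ≤ ∑ k ∈ S, p k * c k := by
  rw [f_eq_sum_mul_add_sum_filter_lt]
  exact Finset.sum_le_sum fun k hk => mul_le_mul_of_nonneg_left (hc k hk) (hp k hk)

theorem violated_parallel_inequality_implies_missed_deadline_general
    {C S : Finset α} {p z c T : α → ℝ} (hSC : S ⊆ C)
    (hp : ∀ k ∈ C, 0 ≤ p k) (hz : ∀ k ∈ C, 0 ≤ z k) (hzS : ∀ k ∈ S, 1 ≤ z k)
    (hc : ∀ k ∈ S, p k + ∑ j ∈ C with j < k, p j * z j ≤ c k)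
    (hviol : ∑ k ∈ S, p k * T k < f S p) :
    ∃ k ∈ S, T k < c k := by
  have load_le (k : α) : ∑ j ∈ S with j < k, p j ≤ ∑ j ∈ C with j < k, p j * z j :=
    sum_le_sum_mul_of_subset_of_one_le (Finset.filter_subset_filter _ hSC)
      (fun j hj => hp j (Finset.mem_of_mem_filter j hj))
      (fun j hj => hz j (Finset.mem_of_mem_filter j hj))
      (fun j hj => hzS j (Finset.mem_of_mem_filter j hj))
  have f_le : f S p ≤ ∑ k ∈ S, p k * c k :=
    f_le_sum_mul (fun k hk => hp k (hSC hk))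
      fun k hk => (add_le_add_right (load_le k) _).trans (hc k hk)
  obtain ⟨k, hk, hlt⟩ := Finset.exists_lt_of_sum_lt (hviol.trans_le f_le)
  exact ⟨k, hk, lt_of_mul_lt_mul_left hlt (hp k (hSC hk))⟩

end

/-- If some subset `S` of accepted coflows violates the parallel inequality
`∑_{k∈S} p_k T_k ≥ f(S)`, then at least one accepted coflow misses its deadline. -/
theorem violated_parallel_inequality_implies_missed_deadline
    {α : Type*} [LinearOrder α]
    (C : Finset α) (z p c T : α → ℝ)
    (hz : ∀ k ∈ C, z k = 0 ∨ z k = 1)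
    (hp : ∀ k ∈ C, 0 ≤ p k)
    (hc : ∀ k ∈ C, p k + ∑ k' ∈ C.filter (fun k' => k' < k), p k' * z k' ≤ c k)
    (S : Finset α) (hS : S ⊆ C.filter (fun k => z k = 1))
    (hviol : ∑ k ∈ S, p k * T k < f S p) :
    ∃ k ∈ C, z k = 1 ∧ T k < c k := by
  have accepted : ∀ k ∈ S, k ∈ C ∧ z k = 1 := fun k hk => Finset.mem_filter.mp (hS hk)
  have z_nonneg : ∀ k ∈ C, 0 ≤ z k := fun k hk => (hz k hk).elim Eq.ge fun h => h ▸ zero_le_one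
  obtain ⟨k, hk, hlt⟩ := violated_parallel_inequality_implies_missed_deadline_general
    (fun k hk => (accepted k hk).1) hp z_nonneg (fun k hk => (accepted k hk).2.ge)
    (fun k hk => hc k (accepted k hk).1) hviol
  exact ⟨k, (accepted k hk).1, (accepted k hk).2, hlt⟩
end
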